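/- arXiv:2505.10303 — 8 statements merged into one kernel-verified Lean document; each statement's English description precedes it below -/
import Mathlib

section
/- For every closed right-linear lattice (RLL) expression e, the expression e^c is complementary to e in the language model: L(e^c) = A^ω \ L(e). More generally, for an RLL expression e(X₁,…,Xₙ) with free variables X₁,…,Xₙ and arbitrary languages A₁,…,Aₙ ⊆ A^ω, L(e(A₁,…,Aₙ))^c-interpretation satisfies L(e^c(A^ω\A₁,…,A^ω\Aₙ)) = A^ω \ L(e(A₁,…,Aₙ)). -/
namespace RLLPaper

/-- Right-linear lattice (RLL) expressions over an alphabet `A`,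
with de Bruijn indices for variables. -/
inductive Expr (A : Type) : Type
  | var : ℕ → Expr A
  | act : A → Expr A → Expr A
  | plus : Expr A → Expr A → Expr A
  | inter : Expr A → Expr A → Expr A
  | mu : Expr A → Expr A
  | nu : Expr A → Expr A

namespace Expr

variable {A : Type}

/-- The expression `0 := μX X`. -/
def zero (A : Type) : Expr A := mu (var 0)

/-- The expression `⊤ := νX X`. -/
def top (A : Type) : Expr A := nu (var 0)

/-- Renaming of (free) de Bruijn variables. -/
def rename : (ℕ → ℕ) → Expr A → Expr A
  | r, var n => var (r n)
  | r, act a e => act a (rename r e)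
  | r, plus e f => plus (rename r e) (rename r f)
  | r, inter e f => inter (rename r e) (rename r f)
  | r, mu e => mu (rename (fun n => match n with | 0 => 0 | m+1 => r m + 1) e)
  | r, nu e => nu (rename (fun n => match n with | 0 => 0 | m+1 => r m + 1) e)

/-- Parallel (capture-avoiding) substitution. -/
def msubst : (ℕ → Expr A) → Expr A → Expr A
  | τ, var n => τ n
  | τ, act a e => act a (msubst τ e)
  | τ, plus e f => plus (msubst τ e) (msubst τ f)
  | τ, inter e f => inter (msubst τ e) (msubst τ f)
  | τ, mu e => mu (msubst (fun n => match n with | 0 => var 0 | m+1 => rename (· + 1) (τ m)) e)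
  | τ, nu e => nu (msubst (fun n => match n with | 0 => var 0 | m+1 => rename (· + 1) (τ m)) e)

/-- Substitution of `g` for the variable bound at de Bruijn index `0`:
`e(g)` when `e` has distinguished free variable `0`. -/
def subst0 (g : Expr A) (e : Expr A) : Expr A :=
  msubst (fun n => match n with | 0 => g | m+1 => var m) e

/-- The de Bruijn variable `n` occurs free in an expression. -/
def FreeIn : ℕ → Expr A → Prop
  | n, var m => n = m
  | n, act _ e => FreeIn n e
  | n, plus e f => FreeIn n e ∨ FreeIn n f
  | n, inter e f => FreeIn n e ∨ FreeIn n f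
  | n, mu e => FreeIn (n+1) e
  | n, nu e => FreeIn (n+1) e

/-- All free variables of the expression are `< k`. -/
def ClosedAbove : Expr A → ℕ → Prop
  | var n, k => n < k
  | act _ e, k => ClosedAbove e k
  | plus e f, k => ClosedAbove e k ∧ ClosedAbove f k
  | inter e f, k => ClosedAbove e k ∧ ClosedAbove f k
  | mu e, k => ClosedAbove e (k+1)
  | nu e, k => ClosedAbove e (k+1)

/-- An expression is closed if it has no free variables. -/
def Closed (e : Expr A) : Prop := ClosedAbove e 0

/-- A finite sum `Σ` of expressions (with `0` for the empty sum). -/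
def listSum (l : List (Expr A)) : Expr A := l.foldr plus (zero A)

/-- The syntactic complement `eᶜ` of an RLL expression:
`Xᶜ = X`, `(a·e)ᶜ = a·eᶜ + Σ_{b ≠ a} b·⊤`, `(e+f)ᶜ = eᶜ ∩ fᶜ`,
`(e∩f)ᶜ = eᶜ + fᶜ`, `(μX e)ᶜ = νX eᶜ`, `(νX e)ᶜ = μX eᶜ`. -/
noncomputable def compl [Fintype A] [DecidableEq A] : Expr A → Expr A
  | var n => var n
  | act a e => plus (act a (compl e))
      (listSum ((((Finset.univ : Finset A).erase a).toList).map (fun b => act b (top A))))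
  | plus e f => inter (compl e) (compl f)
  | inter e f => plus (compl e) (compl f)
  | mu e => nu (compl e)
  | nu e => mu (compl e)

end Expr

end RLLPaper
namespace RLLPaper

namespace Expr

variable {A : Type}

/-- The language interpretation of an RLL expression, relative to an
environment `ρ` assigning languages of ω-words to the free variables.
`μ` is interpreted as the intersection of all prefixed points, `ν` as the
union of all postfixed points (the least/greatest fixed points, by
Knaster-Tarski). -/
def Lang : Expr A → (ℕ → Set (Stream' A)) → Set (Stream' A)
  | var n, ρ => ρ n
  | act a e, ρ => Stream'.cons a '' Lang e ρ
  | plus e f, ρ => Lang e ρ ∪ Lang f ρ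
  | inter e f, ρ => Lang e ρ ∩ Lang f ρ
  | mu e, ρ => ⋂₀ {S | Lang e (fun n => match n with | 0 => S | m+1 => ρ m) ⊆ S}
  | nu e, ρ => ⋃₀ {S | S ⊆ Lang e (fun n => match n with | 0 => S | m+1 => ρ m)}

/-- The language of a (closed) RLL expression. -/
def lang (e : Expr A) : Set (Stream' A) := Lang e (fun _ => ∅)

end Expr

end RLLPaper

namespace RLLPaper

open Expr

theorem Lang_congr {A : Type} (e : Expr A) : ∀ (k : ℕ) (ρ σ : ℕ → Set (Stream' A)),
    ClosedAbove e k → (∀ n < k, ρ n = σ n) → Lang e ρ = Lang e σ := by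
  induction e with
  | var n => intro k ρ σ hc h; exact h n hc
  | act a e ih => intro k ρ σ hc h; simp only [Lang]; rw [ih k ρ σ hc h]
  | plus e f ihe ihf =>
    intro k ρ σ hc h; simp only [Lang]; rw [ihe k ρ σ hc.1 h, ihf k ρ σ hc.2 h]
  | inter e f ihe ihf =>
    intro k ρ σ hc h; simp only [Lang]; rw [ihe k ρ σ hc.1 h, ihf k ρ σ hc.2 h]
  | mu e ih =>
    intro k ρ σ hc h
    simp only [Lang]
    congr 1
    ext S
    simp only [Set.mem_ofPred_eq]
    rw [ih (k+1) _ _ hc]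
    intro n hn
    cases n with
    | zero => rfl
    | succ m => exact h m (by omega)
  | nu e ih =>
    intro k ρ σ hc h
    simp only [Lang]
    congr 1
    ext S
    simp only [Set.mem_ofPred_eq]
    rw [ih (k+1) _ _ hc]
    intro n hn
    cases n with
    | zero => rfl
    | succ m => exact h m (by omega)

theorem mem_listSum {A : Type} (l : List A) (ρ : ℕ → Set (Stream' A)) (s : Stream' A) :
    s ∈ Lang (listSum (l.map (fun b => act b (top A)))) ρ ↔ s.head ∈ l := by
  induction l with
  | nil =>
    simp only [listSum, List.map_nil, List.foldr_nil, zero, Lang, List.not_mem_nil, iff_false]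
    intro h
    exact h ∅ (Set.Subset.refl _)
  | cons b l ih =>
    have : Lang (listSum ((b :: l).map (fun b => act b (top A)))) ρ =
      (Stream'.cons b '' Lang (top A) ρ) ∪ Lang (listSum (l.map (fun b => act b (top A)))) ρ := rfl
    rw [this, Set.mem_union, ih, List.mem_cons]
    refine or_congr ?_ Iff.rfl
    constructor
    · rintro ⟨t, -, rfl⟩
      rfl
    · intro h
      refine ⟨s.tail, ?_, ?_⟩
      · exact ⟨Set.univ, Set.Subset.refl _, trivial⟩
      · rw [← h]; exact Stream'.eta s

theorem Lang_compl {A : Type} [Fintype A] [DecidableEq A] (e : Expr A) :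
    ∀ (ρ : ℕ → Set (Stream' A)), Lang (compl e) (fun n => (ρ n)ᶜ) = (Lang e ρ)ᶜ := by
  have key : ∀ (S : Set (Stream' A)) (ρ : ℕ → Set (Stream' A)),
      (fun n => match n with | 0 => Sᶜ | m+1 => (ρ m)ᶜ : ℕ → Set (Stream' A)) =
      fun n => ((fun n => match n with | 0 => S | m+1 => ρ m : ℕ → Set (Stream' A)) n)ᶜ := by
    intro S ρ
    funext n
    cases n <;> rfl
  induction e with
  | var n => intro ρ; rfl
  | act a e ih =>
    intro ρ
    ext s
    simp only [Expr.compl, Lang]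
    rw [Set.mem_union, mem_listSum, ih]
    simp only [Finset.mem_toList, Finset.mem_erase, Finset.mem_univ, and_true,
      Set.mem_compl_iff, Set.mem_image]
    constructor
    · rintro (⟨t, ht, rfl⟩ | h)
      · rintro ⟨u, hu, h⟩
        have : u = t := (congrArg Stream'.tail h)
        exact ht (this ▸ hu)
      · rintro ⟨u, hu, rfl⟩
        exact h rfl
    · intro h
      by_cases ha : s.head = a
      · left
        have hs : Stream'.cons a s.tail = s := by rw [← ha]; exact Stream'.eta s
        exact ⟨s.tail, fun ht => h ⟨_, ht, hs⟩, hs⟩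
      · exact Or.inr ha
  | plus e f ihe ihf =>
    intro ρ; simp only [Expr.compl, Lang]; rw [ihe, ihf, Set.compl_union]
  | inter e f ihe ihf =>
    intro ρ; simp only [Expr.compl, Lang]; rw [ihe, ihf, Set.compl_inter]
  | mu e ih =>
    intro ρ
    ext s
    simp only [Expr.compl, Lang, Set.mem_sUnion, Set.mem_compl_iff, Set.mem_sInter, Set.mem_ofPred_eq,
      not_forall]
    constructor
    · rintro ⟨S, hS, hs⟩
      refine ⟨Sᶜ, ?_, fun h => h hs⟩
      have := key Sᶜ ρ
      rw [compl_compl] at this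
      rw [this, ih] at hS
      exact Set.subset_compl_comm.mp hS
    · rintro ⟨S, hS, hs⟩
      refine ⟨Sᶜ, ?_, hs⟩
      rw [key, ih]
      exact Set.compl_subset_compl.mpr hS
  | nu e ih =>
    intro ρ
    ext s
    simp only [Expr.compl, Lang, Set.mem_sUnion, Set.mem_compl_iff, Set.mem_sInter, Set.mem_ofPred_eq]
    constructor
    · rintro h ⟨S, hS, hs⟩
      refine h Sᶜ ?_ hs
      rw [key, ih]
      exact Set.compl_subset_compl.mpr hS
    · intro h S hS
      by_contra hs
      refine h ⟨Sᶜ, ?_, hs⟩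
      have := key Sᶜ ρ
      rw [compl_compl] at this
      rw [this, ih] at hS
      exact Set.compl_subset_comm.mp hS

/-- For every closed RLL expression `e`, the syntactic
complement `eᶜ` is complementary to `e` in the language model:
`L(eᶜ) = A^ω \ L(e)`.  More generally, for an expression `e` with free
variables and arbitrary languages assigned to them by an environment `ρ`,
`L(eᶜ)` evaluated in the complemented environment is the set-complement of
`L(e)` evaluated in `ρ`. -/
theorem complement_correct {A : Type} [Fintype A] [DecidableEq A] :
    (∀ e : Expr A, e.Closed → lang (compl e) = (lang e)ᶜ) ∧
    (∀ (e : Expr A) (ρ : ℕ → Set (Stream' A)),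
      Lang (compl e) (fun n => (ρ n)ᶜ) = (Lang e ρ)ᶜ) := by
  refine ⟨fun e he => ?_, Lang_compl⟩
  have h := Lang_compl e (fun _ => Set.univ)
  simp only [Set.compl_univ] at h
  unfold lang
  rw [h, Lang_congr e 0 (fun _ => Set.univ) (fun _ => ∅) he (fun n hn => absurd hn (by omega))]

end RLLPaper
end

section
/- Semantic adequacy of the translation into linear-time μ-calculus: for every closed RLL expression e, L(e) ⊆ L(e°), where L(φ) := {σ ∈ A^ω | σ ⊨ φ} for closed μLTL formulas φ. -/
namespace RLLPaper

/-- Formulas of the linear-time μ-calculus `μLTL` over propositional letters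
from `P`, in negation normal form, with de Bruijn indices for variables. -/
inductive LTL (P : Type) : Type
  | bot : LTL P
  | top : LTL P
  | pos : P → LTL P
  | neg : P → LTL P
  | var : ℕ → LTL P
  | or : LTL P → LTL P → LTL P
  | and : LTL P → LTL P → LTL P
  | next : LTL P → LTL P
  | mu : LTL P → LTL P
  | nu : LTL P → LTL P

namespace LTL

variable {P : Type}

/-- Renaming of free de Bruijn variables of a μLTL formula. -/
def rename : (ℕ → ℕ) → LTL P → LTL P
  | _, bot => bot
  | _, top => top
  | _, pos p => pos p
  | _, neg p => neg p
  | r, var n => var (r n)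
  | r, or φ ψ => or (rename r φ) (rename r ψ)
  | r, and φ ψ => and (rename r φ) (rename r ψ)
  | r, next φ => next (rename r φ)
  | r, mu φ => mu (rename (fun n => match n with | 0 => 0 | m+1 => r m + 1) φ)
  | r, nu φ => nu (rename (fun n => match n with | 0 => 0 | m+1 => r m + 1) φ)

/-- Parallel capture-avoiding substitution for μLTL formulas. -/
def msubst : (ℕ → LTL P) → LTL P → LTL P
  | _, bot => bot
  | _, top => top
  | _, pos p => pos p
  | _, neg p => neg p
  | τ, var n => τ n
  | τ, or φ ψ => or (msubst τ φ) (msubst τ ψ)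
  | τ, and φ ψ => and (msubst τ φ) (msubst τ ψ)
  | τ, next φ => next (msubst τ φ)
  | τ, mu φ => mu (msubst (fun n => match n with | 0 => var 0 | m+1 => rename (· + 1) (τ m)) φ)
  | τ, nu φ => nu (msubst (fun n => match n with | 0 => var 0 | m+1 => rename (· + 1) (τ m)) φ)

/-- Substitution `φ(χ)` of `χ` for the variable bound at de Bruijn index 0. -/
def subst0 (χ : LTL P) (φ : LTL P) : LTL P :=
  msubst (fun n => match n with | 0 => χ | m+1 => var m) φ

/-- Negation, extended to all formulas by De Morgan duality,
with `◯` self-dual. -/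
def negF : LTL P → LTL P
  | bot => top
  | top => bot
  | pos p => neg p
  | neg p => pos p
  | var n => var n
  | or φ ψ => and (negF φ) (negF ψ)
  | and φ ψ => or (negF φ) (negF ψ)
  | next φ => next (negF φ)
  | mu φ => nu (negF φ)
  | nu φ => mu (negF φ)

/-- Implication macro `φ → ψ := ¬φ ∨ ψ`. -/
def impF (φ ψ : LTL P) : LTL P := or (negF φ) ψ

/-- Bi-implication macro. -/
def iffF (φ ψ : LTL P) : LTL P := and (impF φ ψ) (impF ψ φ)

/-- Semantics of μLTL over the ω-word `σ ∈ (P(𝐏))^ω` (the canonical linear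
Kripke structure), relative to an environment `ρ` for the free variables:
`φ^σ ⊆ ω` is the set of time points at which `φ` holds. -/
def sem : LTL P → Stream' (Finset P) → (ℕ → Set ℕ) → Set ℕ
  | bot, _, _ => ∅
  | top, _, _ => Set.univ
  | pos p, σ, _ => {n | p ∈ σ.get n}
  | neg p, σ, _ => {n | p ∉ σ.get n}
  | var n, _, ρ => ρ n
  | or φ ψ, σ, ρ => sem φ σ ρ ∪ sem ψ σ ρ
  | and φ ψ, σ, ρ => sem φ σ ρ ∩ sem ψ σ ρ
  | next φ, σ, ρ => {n | n + 1 ∈ sem φ σ ρ}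
  | mu φ, σ, ρ => ⋂₀ {S | sem φ σ (fun n => match n with | 0 => S | m+1 => ρ m) ⊆ S}
  | nu φ, σ, ρ => ⋃₀ {S | S ⊆ sem φ σ (fun n => match n with | 0 => S | m+1 => ρ m)}

/-- `σ ⊨ φ` iff `0 ∈ φ^σ` (for closed `φ`). -/
def Sat (σ : Stream' (Finset P)) (φ : LTL P) : Prop := 0 ∈ sem φ σ (fun _ => ∅)

/-- A finite conjunction `⋀` of formulas. -/
def bigAnd (l : List (LTL P)) : LTL P := l.foldr and top

end LTL

/-- Classical propositional formulas (used to state "all propositional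
tautologies" as an axiom scheme of the μLTL Hilbert system). -/
inductive PF : Type
  | pvar : ℕ → PF
  | bot : PF
  | top : PF
  | disj : PF → PF → PF
  | conj : PF → PF → PF
  | pneg : PF → PF

namespace PF

/-- Boolean evaluation of a propositional formula. -/
def eval : (ℕ → Bool) → PF → Bool
  | v, pvar n => v n
  | _, bot => false
  | _, top => true
  | v, disj p q => eval v p || eval v q
  | v, conj p q => eval v p && eval v q
  | v, pneg p => ! eval v p

/-- A propositional tautology. -/
def Taut (p : PF) : Prop := ∀ v, eval v p = true

/-- Substitution of μLTL formulas into a propositional formula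
(negation is interpreted via De Morgan negation `negF`). -/
def substLTL {P : Type} (s : ℕ → LTL P) : PF → LTL P
  | pvar n => s n
  | bot => LTL.bot
  | top => LTL.top
  | disj p q => LTL.or (substLTL s p) (substLTL s q)
  | conj p q => LTL.and (substLTL s p) (substLTL s q)
  | pneg p => LTL.negF (substLTL s p)

end PF

/-- The Hilbert-style axiomatisation of μLTL: all propositional tautologies,
normality of `◯` over `∨` and `∧`, fixed-point unfolding axioms, with
modus ponens, necessitation, induction and coinduction rules. -/
inductive LTLProves {P : Type} : LTL P → Prop
  | taut (p : PF) (s : ℕ → LTL P) : p.Taut → LTLProves (p.substLTL s)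
  | next_or (φ ψ : LTL P) :
      LTLProves (LTL.iffF (.next (.or φ ψ)) (.or (.next φ) (.next ψ)))
  | next_and (φ ψ : LTL P) :
      LTLProves (LTL.iffF (.next (.and φ ψ)) (.and (.next φ) (.next ψ)))
  | mu_fold (φ : LTL P) : LTLProves (LTL.impF (LTL.subst0 (.mu φ) φ) (.mu φ))
  | nu_unfold (φ : LTL P) : LTLProves (LTL.impF (.nu φ) (LTL.subst0 (.nu φ) φ))
  | mp {φ ψ : LTL P} : LTLProves φ → LTLProves (LTL.impF φ ψ) → LTLProves ψ
  | nec {φ : LTL P} : LTLProves φ → LTLProves (.next φ)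
  | ind {φ ψ : LTL P} :
      LTLProves (LTL.impF (LTL.subst0 ψ φ) ψ) → LTLProves (LTL.impF (.mu φ) ψ)
  | coind {φ ψ : LTL P} :
      LTLProves (LTL.impF ψ (LTL.subst0 ψ φ)) → LTLProves (LTL.impF ψ (.nu φ))

end RLLPaper
namespace RLLPaper

variable {P : Type} [Fintype P] [DecidableEq P]

/-- The translation `e°` of RLL expressions over the alphabet `A = P(𝐏)` into
μLTL formulas: `X° = X`, `(a·e)° = ⋀_{p∈a} p ∧ ⋀_{p∉a} ¬p ∧ ◯e°`,
`(e+f)° = e° ∨ f°`, `(e∩f)° = e° ∧ f°`, `(μX e)° = μX e°`, `(νX e)° = νX e°`. -/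
noncomputable def toLTL : Expr (Finset P) → LTL P
  | .var n => .var n
  | .act a e => .and (LTL.bigAnd (a.toList.map LTL.pos))
      (.and (LTL.bigAnd ((aᶜ : Finset P).toList.map LTL.neg)) (.next (toLTL e)))
  | .plus e f => .or (toLTL e) (toLTL f)
  | .inter e f => .and (toLTL e) (toLTL f)
  | .mu e => .mu (toLTL e)
  | .nu e => .nu (toLTL e)

/-- The translation `φ•` of μLTL formulas into RLL expressions over the
alphabet `A = P(𝐏)`: `⊥• = 0`, `⊤• = ⊤`, `p• = Σ_{a∋p} a·⊤`,
`(¬p)• = Σ_{a∌p} a·⊤`, `X• = X`, `(φ∨ψ)• = φ•+ψ•`, `(φ∧ψ)• = φ•∩ψ•`,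
`(◯φ)• = Σ_{a∈A} a·φ•`, `(μXφ)• = μX φ•`, `(νXφ)• = νX φ•`. -/
noncomputable def toRLL : LTL P → Expr (Finset P)
  | .bot => Expr.zero (Finset P)
  | .top => Expr.top (Finset P)
  | .pos p => Expr.listSum
      ((((Finset.univ : Finset (Finset P)).filter (fun a => p ∈ a)).toList).map
        (fun a => Expr.act a (Expr.top (Finset P))))
  | .neg p => Expr.listSum
      ((((Finset.univ : Finset (Finset P)).filter (fun a => p ∉ a)).toList).map
        (fun a => Expr.act a (Expr.top (Finset P))))
  | .var n => .var n
  | .or φ ψ => .plus (toRLL φ) (toRLL ψ)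
  | .and φ ψ => .inter (toRLL φ) (toRLL ψ)
  | .next φ => Expr.listSum
      (((Finset.univ : Finset (Finset P)).toList).map (fun a => Expr.act a (toRLL φ)))
  | .mu φ => .mu (toRLL φ)
  | .nu φ => .nu (toRLL φ)

end RLLPaper

namespace RLLPaper

open Expr

theorem mem_bigAnd {P : Type} (l : List (LTL P)) (σ : Stream' (Finset P)) (ρ : ℕ → Set ℕ) (k : ℕ)
    (h : ∀ φ ∈ l, k ∈ LTL.sem φ σ ρ) : k ∈ LTL.sem (LTL.bigAnd l) σ ρ := by
  induction l with
  | nil => exact Set.mem_univ k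
  | cons φ l ih =>
    exact ⟨h φ (by simp), ih (fun ψ hψ => h ψ (by simp [hψ]))⟩

theorem adequacy_aux {P : Type} [Fintype P] [DecidableEq P] (σ : Stream' (Finset P))
    (e : Expr (Finset P)) : ∀ (ρ : ℕ → Set (Stream' (Finset P))) (η : ℕ → Set ℕ),
    (∀ n k, σ.drop k ∈ ρ n → k ∈ η n) →
    ∀ k, σ.drop k ∈ Lang e ρ → k ∈ LTL.sem (toLTL e) σ η := by
  induction e with
  | var n => intro ρ η h k hk; exact h n k hk
  | act a e ih =>
    intro ρ η h k hk
    obtain ⟨τ, hτ, heq⟩ := hk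
    have h0 : σ.get k = a := by
      have := congrArg Stream'.head heq
      rw [Stream'.head_cons, Stream'.head_drop] at this
      exact this.symm
    have h1 : σ.drop (k+1) = τ := by
      have := congrArg Stream'.tail heq
      rw [Stream'.tail_cons] at this
      rw [this, Stream'.tail_drop']
    refine ⟨mem_bigAnd _ _ _ _ ?_, mem_bigAnd _ _ _ _ ?_, ih ρ η h (k+1) (by rw [h1]; exact hτ)⟩
    · intro φ hφ
      obtain ⟨p, hp, rfl⟩ := List.mem_map.1 hφ
      change p ∈ σ.get k
      rw [h0]; simpa using hp
    · intro φ hφ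
      obtain ⟨p, hp, rfl⟩ := List.mem_map.1 hφ
      change p ∉ σ.get k
      rw [h0]; simpa using hp
  | plus e f ihe ihf =>
    intro ρ η h k hk
    exact hk.imp (ihe ρ η h k) (ihf ρ η h k)
  | inter e f ihe ihf =>
    intro ρ η h k hk
    exact ⟨ihe ρ η h k hk.1, ihf ρ η h k hk.2⟩
  | mu e ih =>
    intro ρ η h k hk S hS
    refine hk {τ | ∀ j, σ.drop j = τ → j ∈ S} ?_ k rfl
    rintro τ hτ j rfl
    refine hS (ih _ _ ?_ j hτ)
    rintro (_ | n) i hi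
    · exact hi i rfl
    · exact h n i hi
  | nu e ih =>
    intro ρ η h k hk
    obtain ⟨S, hS, hkS⟩ := hk
    refine ⟨{j | σ.drop j ∈ S}, ?_, hkS⟩
    intro j hj
    refine ih _ _ ?_ j (hS hj)
    rintro (_ | n) i hi
    · exact hi
    · exact h n i hi

/-- Semantic adequacy of the translation into the linear-time
μ-calculus: for every closed RLL expression `e` over the alphabet `A = P(𝐏)`,
`L(e) ⊆ L(e°)`, where `L(φ) = {σ ∈ A^ω | σ ⊨ φ}` for closed μLTL formulas. -/
theorem semantic_adequacy {P : Type} [Fintype P] [DecidableEq P]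
    (e : Expr (Finset P)) (he : e.Closed) :
    lang e ⊆ {σ : Stream' (Finset P) | LTL.Sat σ (toLTL e)} := by
  intro σ hσ
  exact adequacy_aux σ e _ _ (fun _ _ h => h.elim) 0 hσ

end RLLPaper
end

section
/- Mixed substitution lemma: for every μLTL formula φ(X), every closed RLL expression χ (with the expanded μLTL syntax admitting every subset of ω as a constant), and every ω-word σ, (φ(L(χ)))^σ ⊆ (φ(χ°))^σ, where L(χ) is treated as a constant A ⊆ A^ω interpreted by A^σ := {n ∈ ω | σⁿ ∈ A} with σⁿ the n-th tail of σ. -/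
namespace RLLPaper

open Expr

theorem sem_mono_aux {P : Type} (φ : LTL P) (σ : Stream' (Finset P)) :
    ∀ (ρ ρ' : ℕ → Set ℕ), (∀ n, ρ n ⊆ ρ' n) → LTL.sem φ σ ρ ⊆ LTL.sem φ σ ρ' := by
  induction φ with
  | bot => intro ρ ρ' h; exact subset_rfl
  | top => intro ρ ρ' h; exact subset_rfl
  | pos p => intro ρ ρ' h; exact subset_rfl
  | neg p => intro ρ ρ' h; exact subset_rfl
  | var n => intro ρ ρ' h; exact h n
  | or φ ψ ih1 ih2 => intro ρ ρ' h; exact Set.union_subset_union (ih1 _ _ h) (ih2 _ _ h)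
  | and φ ψ ih1 ih2 => intro ρ ρ' h; exact Set.inter_subset_inter (ih1 _ _ h) (ih2 _ _ h)
  | next φ ih => intro ρ ρ' h n hn; exact ih _ _ h hn
  | mu φ ih =>
    intro ρ ρ' h n hn S hS
    refine hn S (subset_trans (ih _ _ ?_) hS)
    rintro (_ | m)
    · exact subset_rfl
    · exact h m
  | nu φ ih =>
    rintro ρ ρ' h n ⟨S, hS, hn⟩
    refine ⟨S, subset_trans hS (ih _ _ ?_), hn⟩
    rintro (_ | m)
    · exact subset_rfl
    · exact h m

theorem sem_rename_aux {P : Type} (φ : LTL P) (σ : Stream' (Finset P)) :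
    ∀ (r : ℕ → ℕ) (ρ ρ' : ℕ → Set ℕ), (∀ n, ρ (r n) = ρ' n) →
      LTL.sem (LTL.rename r φ) σ ρ = LTL.sem φ σ ρ' := by
  induction φ with
  | bot => intro r ρ ρ' h; rfl
  | top => intro r ρ ρ' h; rfl
  | pos p => intro r ρ ρ' h; rfl
  | neg p => intro r ρ ρ' h; rfl
  | var n => intro r ρ ρ' h; exact h n
  | or φ ψ ih1 ih2 =>
    intro r ρ ρ' h; simp only [LTL.rename, LTL.sem]; rw [ih1 _ _ _ h, ih2 _ _ _ h]
  | and φ ψ ih1 ih2 =>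
    intro r ρ ρ' h; simp only [LTL.rename, LTL.sem]; rw [ih1 _ _ _ h, ih2 _ _ _ h]
  | next φ ih => intro r ρ ρ' h; simp only [LTL.rename, LTL.sem]; rw [ih _ _ _ h]
  | mu φ ih =>
    intro r ρ ρ' h
    simp only [LTL.rename, LTL.sem]
    congr 1; ext S
    simp only [Set.mem_setOf_eq]
    rw [ih _ _ _ ?_]
    rintro (_ | m)
    · rfl
    · exact h m
  | nu φ ih =>
    intro r ρ ρ' h
    simp only [LTL.rename, LTL.sem]
    congr 1; ext S
    simp only [Set.mem_setOf_eq]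
    rw [ih _ _ _ ?_]
    rintro (_ | m)
    · rfl
    · exact h m

theorem sem_msubst_aux {P : Type} (φ : LTL P) (σ : Stream' (Finset P)) :
    ∀ (τ : ℕ → LTL P) (ρ ρ' : ℕ → Set ℕ), (∀ n, LTL.sem (τ n) σ ρ = ρ' n) →
      LTL.sem (LTL.msubst τ φ) σ ρ = LTL.sem φ σ ρ' := by
  induction φ with
  | bot => intro r ρ ρ' h; rfl
  | top => intro r ρ ρ' h; rfl
  | pos p => intro r ρ ρ' h; rfl
  | neg p => intro r ρ ρ' h; rfl
  | var n => intro r ρ ρ' h; exact h n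
  | or φ ψ ih1 ih2 =>
    intro r ρ ρ' h; simp only [LTL.msubst, LTL.sem]; rw [ih1 _ _ _ h, ih2 _ _ _ h]
  | and φ ψ ih1 ih2 =>
    intro r ρ ρ' h; simp only [LTL.msubst, LTL.sem]; rw [ih1 _ _ _ h, ih2 _ _ _ h]
  | next φ ih => intro r ρ ρ' h; simp only [LTL.msubst, LTL.sem]; rw [ih _ _ _ h]
  | mu φ ih =>
    intro r ρ ρ' h
    simp only [LTL.msubst, LTL.sem]
    congr 1; ext S
    simp only [Set.mem_setOf_eq]
    rw [ih _ _ _ ?_]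
    rintro (_ | m)
    · rfl
    · refine Eq.trans ?_ (h m)
      exact sem_rename_aux _ _ _ _ ρ (fun n => rfl)
  | nu φ ih =>
    intro r ρ ρ' h
    simp only [LTL.msubst, LTL.sem]
    congr 1; ext S
    simp only [Set.mem_setOf_eq]
    rw [ih _ _ _ ?_]
    rintro (_ | m)
    · rfl
    · refine Eq.trans ?_ (h m)
      exact sem_rename_aux _ _ _ _ ρ (fun n => rfl)

theorem mem_bigAnd_aux {P : Type} (l : List (LTL P)) (σ : Stream' (Finset P)) (ρ : ℕ → Set ℕ)
    (k : ℕ) (h : ∀ ψ ∈ l, k ∈ LTL.sem ψ σ ρ) : k ∈ LTL.sem (LTL.bigAnd l) σ ρ := by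
  induction l with
  | nil => exact Set.mem_univ k
  | cons a l ih =>
    exact ⟨h a (by simp), ih (fun ψ hψ => h ψ (by simp [hψ]))⟩

theorem lang_sem_aux {P : Type} [Fintype P] [DecidableEq P] (e : Expr (Finset P))
    (σ : Stream' (Finset P)) :
    ∀ (η : ℕ → Set (Stream' (Finset P))) (ρ : ℕ → Set ℕ),
      (∀ n k, Stream'.drop k σ ∈ η n → k ∈ ρ n) →
      ∀ k, Stream'.drop k σ ∈ Expr.Lang e η → k ∈ LTL.sem (toLTL e) σ ρ := by
  induction e with
  | var n => intro η ρ h k hk; exact h n k hk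
  | act a e ih =>
    rintro η ρ h k ⟨w, hw, hk⟩
    have h0 : σ.get k = a := by
      have := congrArg (fun s => Stream'.get s 0) hk
      simpa [Stream'.get_drop] using this.symm
    have h1 : Stream'.drop (k+1) σ = w := by
      have := congrArg Stream'.tail hk
      rw [Stream'.tail_cons] at this
      rw [this, Stream'.tail_drop']
    refine ⟨mem_bigAnd_aux _ _ _ _ ?_, mem_bigAnd_aux _ _ _ _ ?_, ?_⟩
    · intro ψ hψ
      simp only [List.mem_map, Finset.mem_toList] at hψ
      obtain ⟨p, hp, rfl⟩ := hψ
      change p ∈ σ.get k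
      rwa [h0]
    · intro ψ hψ
      simp only [List.mem_map, Finset.mem_toList, Finset.mem_compl] at hψ
      obtain ⟨p, hp, rfl⟩ := hψ
      change p ∉ σ.get k
      rwa [h0]
    · exact ih η ρ h (k+1) (h1 ▸ hw)
  | plus e f ih1 ih2 =>
    intro η ρ h k hk
    exact hk.imp (ih1 η ρ h k) (ih2 η ρ h k)
  | inter e f ih1 ih2 =>
    intro η ρ h k hk
    exact ⟨ih1 η ρ h k hk.1, ih2 η ρ h k hk.2⟩
  | mu e ih =>
    intro η ρ h k hk T hT
    refine hk {w | ∀ j, Stream'.drop j σ = w → j ∈ T} ?_ k rfl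
    rintro w hw j rfl
    refine hT (ih _ _ ?_ j hw)
    rintro (_ | m) i hi
    · exact hi i rfl
    · exact h m i hi
  | nu e ih =>
    rintro η ρ h k ⟨S, hS, hk⟩
    refine ⟨{j | Stream'.drop j σ ∈ S}, ?_, hk⟩
    intro j hj
    refine ih _ _ ?_ j (hS hj)
    rintro (_ | m) i hi
    · exact hi
    · exact h m i hi

/-- Mixed substitution lemma: for every μLTL formula `φ(X)`
(with `X` the variable of de Bruijn index 0), every closed RLL expression `χ`
and every ω-word `σ`, `(φ(L(χ)))^σ ⊆ (φ(χ°))^σ`.  Here the language constant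
`L(χ)` is interpreted at time `n` by whether the `n`-th tail of `σ` belongs to
`L(χ)`, i.e. it is evaluated via the environment sending `X` to
`{n | σⁿ ∈ L(χ)}`. -/
theorem mixed_substitution {P : Type} [Fintype P] [DecidableEq P]
    (φ : LTL P) (χ : Expr (Finset P)) (hχ : χ.Closed)
    (σ : Stream' (Finset P)) (ρ : ℕ → Set ℕ) :
    LTL.sem φ σ
        (fun n => match n with
          | 0 => {k : ℕ | Stream'.drop k σ ∈ lang χ}
          | m+1 => ρ m)
      ⊆ LTL.sem (LTL.subst0 (toLTL χ) φ) σ ρ := by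
  unfold LTL.subst0
  rw [sem_msubst_aux φ σ _ ρ _ (fun n => rfl)]
  apply sem_mono_aux
  rintro (_ | m)
  · intro k hk
    exact lang_sem_aux χ σ (fun _ => ∅) ρ (fun _ _ h => h.elim) k hk
  · exact subset_rfl


end RLLPaper
end

section
/- The quantifier-free complementation schema implies the duality axioms: in the theory axiomatised by the bounded distributive lattice axioms, the letter-homomorphism axioms, the partition axioms, the least-prefixed-point axioms for μ, the greatest-postfixed-point axioms for ν, and the schema (⊤ ≤ e + e^c and e ∩ e^c ≤ 0 for all closed e), one can derive both duality schemas: if ∀X,Y (⊤ ≤ X+Y implies ⊤ ≤ e(X)+f(Y)) then ⊤ ≤ μX e(X) + νY f(Y), and if ∀X,Y (X∩Y ≤ 0 implies e(X)∩f(Y) ≤ 0) then μX e(X) ∩ νY f(Y) ≤ 0. -/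
namespace RLLPaper

open Expr

/-- Derivability in the theory axiomatised by the bounded distributive lattice
axioms, the letter-homomorphism axioms, the partition axioms, the
least-prefixed-point axioms for `μ`, the greatest-postfixed-point axioms for
`ν`, and the quantifier-free complementation schema
(`⊤ ≤ e + eᶜ` and `e ∩ eᶜ ≤ 0` for all closed `e`), in place of the μ-ν
duality schemas.  `e ≤ f` is the equation `e + f = f`. -/
inductive ProvesC {A : Type} [Fintype A] [DecidableEq A] : Expr A → Expr A → Prop
  -- equational logic
  | refl (e : Expr A) : ProvesC e e
  | symm {e f : Expr A} : ProvesC e f → ProvesC f e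
  | trans {e f g : Expr A} : ProvesC e f → ProvesC f g → ProvesC e g
  | act_congr (a : A) {e f} : ProvesC e f → ProvesC (act a e) (act a f)
  | plus_congr {e e' f f' : Expr A} :
      ProvesC e e' → ProvesC f f' → ProvesC (plus e f) (plus e' f')
  | inter_congr {e e' f f' : Expr A} :
      ProvesC e e' → ProvesC f f' → ProvesC (inter e f) (inter e' f')
  | mu_congr {e f : Expr A} : ProvesC e f → ProvesC (mu e) (mu f)
  | nu_congr {e f : Expr A} : ProvesC e f → ProvesC (nu e) (nu f)
  -- bounded distributive lattice axioms
  | plus_zero (e : Expr A) : ProvesC (plus e (zero A)) e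
  | plus_assoc (e f g : Expr A) : ProvesC (plus e (plus f g)) (plus (plus e f) g)
  | plus_comm (e f : Expr A) : ProvesC (plus e f) (plus f e)
  | plus_idem (e : Expr A) : ProvesC (plus e e) e
  | plus_absorb (e f : Expr A) : ProvesC (plus e (inter e f)) e
  | plus_distrib (e f g : Expr A) :
      ProvesC (plus e (inter f g)) (inter (plus e f) (plus e g))
  | inter_top (e : Expr A) : ProvesC (inter e (top A)) e
  | inter_assoc (e f g : Expr A) : ProvesC (inter e (inter f g)) (inter (inter e f) g)
  | inter_comm (e f : Expr A) : ProvesC (inter e f) (inter f e)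
  | inter_idem (e : Expr A) : ProvesC (inter e e) e
  | inter_absorb (e f : Expr A) : ProvesC (inter e (plus e f)) e
  | inter_distrib (e f g : Expr A) :
      ProvesC (inter e (plus f g)) (plus (inter e f) (inter e g))
  -- letter homomorphism axioms
  | act_zero (a : A) : ProvesC (act a (zero A)) (zero A)
  | act_plus (a : A) (e f : Expr A) :
      ProvesC (act a (plus e f)) (plus (act a e) (act a f))
  | act_inter (a : A) (e f : Expr A) :
      ProvesC (act a (inter e f)) (inter (act a e) (act a f))
  -- partition axioms
  | act_disjoint {a b : A} (e f : Expr A) : a ≠ b →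
      ProvesC (inter (act a e) (act b f)) (zero A)
  | top_partition :
      ProvesC (top A)
        (listSum (((Finset.univ : Finset A).toList).map (fun a => act a (top A))))
  -- μX e is a least prefixed point of X ↦ e(X)
  | mu_prefix (e : Expr A) :
      ProvesC (plus (subst0 (mu e) e) (mu e)) (mu e)
  | mu_ind {e f : Expr A} :
      ProvesC (plus (subst0 f e) f) f → ProvesC (plus (mu e) f) f
  -- νX e is a greatest postfixed point of X ↦ e(X)
  | nu_postfix (e : Expr A) :
      ProvesC (plus (nu e) (subst0 (nu e) e)) (subst0 (nu e) e)
  | nu_coind {e f : Expr A} :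
      ProvesC (plus f (subst0 f e)) (subst0 f e) → ProvesC (plus f (nu e)) (nu e)
  -- the complementation schema, for closed expressions
  | compl_top {e : Expr A} : e.Closed →
      ProvesC (plus (top A) (plus e (compl e))) (plus e (compl e))
  | compl_bot {e : Expr A} : e.Closed →
      ProvesC (plus (inter e (compl e)) (zero A)) (zero A)

end RLLPaper

namespace RLLPaper

open Expr

theorem pc_le_trans {A : Type} [Fintype A] [DecidableEq A] {x y z : Expr A}
    (h : ProvesC (plus x y) y) (k : ProvesC (plus y z) z) : ProvesC (plus x z) z :=
  ((ProvesC.plus_congr (.refl x) k.symm).trans (.plus_assoc x y z)).trans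
    ((ProvesC.plus_congr h (.refl z)).trans k)

theorem pc_of_eq {A : Type} [Fintype A] [DecidableEq A] {x y : Expr A}
    (h : ProvesC x y) : ProvesC (plus x y) y :=
  (ProvesC.plus_congr h (.refl y)).trans (.plus_idem y)

theorem pc_le_left {A : Type} [Fintype A] [DecidableEq A] (x y : Expr A) :
    ProvesC (plus x (plus x y)) (plus x y) :=
  (ProvesC.plus_assoc x x y).trans (.plus_congr (.plus_idem x) (.refl y))

theorem pc_le_right {A : Type} [Fintype A] [DecidableEq A] (x y : Expr A) :
    ProvesC (plus y (plus x y)) (plus x y) :=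
  pc_le_trans (pc_le_left y x) (pc_of_eq (.plus_comm y x))

theorem pc_plus_le {A : Type} [Fintype A] [DecidableEq A] {x y z : Expr A}
    (h : ProvesC (plus x z) z) (k : ProvesC (plus y z) z) :
    ProvesC (plus (plus x y) z) z :=
  (ProvesC.plus_assoc x y z).symm.trans ((ProvesC.plus_congr (.refl x) k).trans h)

theorem pc_inter_left {A : Type} [Fintype A] [DecidableEq A] (x y : Expr A) :
    ProvesC (plus (inter x y) x) x :=
  (ProvesC.plus_comm _ _).trans (.plus_absorb x y)

theorem pc_inter_right {A : Type} [Fintype A] [DecidableEq A] (x y : Expr A) :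
    ProvesC (plus (inter x y) y) y :=
  pc_le_trans (pc_of_eq (.inter_comm x y)) (pc_inter_left y x)

theorem pc_le_inter {A : Type} [Fintype A] [DecidableEq A] {x y z : Expr A}
    (h : ProvesC (plus x y) y) (k : ProvesC (plus x z) z) :
    ProvesC (plus x (inter y z)) (inter y z) :=
  (ProvesC.plus_distrib x y z).trans (.inter_congr h k)

theorem pc_zero_le {A : Type} [Fintype A] [DecidableEq A] (x : Expr A) :
    ProvesC (plus (zero A) x) x :=
  (ProvesC.plus_comm _ _).trans (.plus_zero x)

theorem pc_le_top {A : Type} [Fintype A] [DecidableEq A] (x : Expr A) :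
    ProvesC (plus x (top A)) (top A) :=
  pc_le_trans (pc_of_eq (ProvesC.inter_top x).symm) (pc_inter_right x (top A))

/-- If `⊤ ≤ m + F` and `c ∩ m ≤ 0` then `c ≤ F`. -/
theorem pc_resid {A : Type} [Fintype A] [DecidableEq A] {m c F : Expr A}
    (h : ProvesC (plus (top A) (plus m F)) (plus m F))
    (k : ProvesC (plus (inter c m) (zero A)) (zero A)) :
    ProvesC (plus c F) F :=
  pc_le_trans (pc_le_inter (pc_of_eq (.refl c)) (pc_le_trans (pc_le_top c) h))
    (pc_le_trans (pc_of_eq (.inter_distrib c m F))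
      (pc_plus_le (pc_le_trans k (pc_zero_le F)) (pc_inter_right c F)))

/-- The quantifier-free complementation schema implies the
duality axioms: in the theory `ProvesC` (base axioms plus the complementation
schema `⊤ ≤ e + eᶜ`, `e ∩ eᶜ ≤ 0` for closed `e`), both μ-ν duality schemas
are derivable: for `e(X)` and `f(Y)` (expressions whose only free variable is
the bound one), if `⊤ ≤ g + h` provably implies `⊤ ≤ e(g) + f(h)` for all
`g, h`, then `⊤ ≤ μX e(X) + νY f(Y)` is provable; and if `g ∩ h ≤ 0` provably
implies `e(g) ∩ f(h) ≤ 0` for all `g, h`, then `μX e(X) ∩ νY f(Y) ≤ 0` is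
provable (`e ≤ f` abbreviates `e + f = f`). -/
theorem complement_schema_implies_duality {A : Type} [Fintype A] [DecidableEq A]
    (e f : Expr A) (he : (Expr.mu e).Closed) (hf : (Expr.nu f).Closed) :
    ((∀ g h : Expr A,
        ProvesC (plus (top A) (plus g h)) (plus g h) →
        ProvesC (plus (top A) (plus (subst0 g e) (subst0 h f)))
          (plus (subst0 g e) (subst0 h f))) →
      ProvesC (plus (top A) (plus (mu e) (nu f))) (plus (mu e) (nu f))) ∧
    ((∀ g h : Expr A,
        ProvesC (plus (inter g h) (zero A)) (zero A) →
        ProvesC (plus (inter (subst0 g e) (subst0 h f)) (zero A)) (zero A)) →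
      ProvesC (plus (inter (mu e) (nu f)) (zero A)) (zero A)) := by
  constructor
  · intro H
    have h1 := H _ _ (ProvesC.compl_top he)
    have h2 := pc_le_trans h1 (pc_plus_le
      (pc_le_trans (ProvesC.mu_prefix e) (pc_le_left (mu e) (subst0 (compl (mu e)) f)))
      (pc_le_right _ _))
    have h3 := ProvesC.nu_coind (pc_resid h2
      (pc_le_trans (pc_of_eq (.inter_comm _ _)) (ProvesC.compl_bot he)))
    exact pc_le_trans (ProvesC.compl_top he)
      (pc_plus_le (pc_le_left _ _) (pc_le_trans h3 (pc_le_right _ _)))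
  · intro H
    have h0 := pc_le_trans (pc_of_eq (.inter_comm _ _)) (ProvesC.compl_bot hf)
    have h1 := H _ _ h0
    have h2 := pc_le_trans (pc_le_inter (pc_inter_left _ _)
      (pc_le_trans (pc_inter_right (subst0 (compl (nu f)) e) (nu f)) (ProvesC.nu_postfix f))) h1
    have h3 := ProvesC.mu_ind (pc_resid (ProvesC.compl_top hf) h2)
    exact pc_le_trans (pc_le_inter (pc_le_trans (pc_inter_left _ _) h3) (pc_inter_right _ _)) h0


end RLLPaper
end

section
/- The Fischer-Ladner closure FL(e) of every RLL expression e is finite; in fact its size is linear in the size of e. The proof uses the identity FL(σX e) = {σX e} ∪ {f[σX e / X] : f ∈ FL(e)} for σ ∈ {μ, ν}. -/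
namespace RLLPaper

open Expr

/-- The Fischer-Ladner relation `→_FL` on RLL expressions: the smallest
relation with `a·e →_FL e`, `e₀⋆e₁ →_FL eᵢ` for `⋆ ∈ {+,∩}`, and
`σX e(X) →_FL e(σX e(X))` for `σ ∈ {μ,ν}`. -/
inductive FLStep {A : Type} : Expr A → Expr A → Prop
  | act (a : A) (e : Expr A) : FLStep (Expr.act a e) e
  | plus_left (e f : Expr A) : FLStep (Expr.plus e f) e
  | plus_right (e f : Expr A) : FLStep (Expr.plus e f) f
  | inter_left (e f : Expr A) : FLStep (Expr.inter e f) e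
  | inter_right (e f : Expr A) : FLStep (Expr.inter e f) f
  | mu (e : Expr A) : FLStep (Expr.mu e) (subst0 (Expr.mu e) e)
  | nu (e : Expr A) : FLStep (Expr.nu e) (subst0 (Expr.nu e) e)

/-- The Fischer-Ladner closure `FL(e) = {f | f ≤_FL e}`, where `≤_FL` is the
reflexive-transitive closure of `→_FL`. -/
def FL {A : Type} (e : Expr A) : Set (Expr A) :=
  {f | Relation.ReflTransGen FLStep e f}

/-- The size (number of constructors) of an RLL expression. -/
def Expr.size {A : Type} : Expr A → ℕ
  | .var _ => 1
  | .act _ e => Expr.size e + 1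
  | .plus e f => Expr.size e + Expr.size f + 1
  | .inter e f => Expr.size e + Expr.size f + 1
  | .mu e => Expr.size e + 1
  | .nu e => Expr.size e + 1

section Helpers
variable {A : Type}

def upr (r : ℕ → ℕ) : ℕ → ℕ := fun n => match n with | 0 => 0 | m+1 => r m + 1
def ups (τ : ℕ → Expr A) : ℕ → Expr A :=
  fun n => match n with | 0 => var 0 | m+1 => rename (· + 1) (τ m)

theorem rename_mu (r : ℕ → ℕ) (e : Expr A) : rename r (mu e) = mu (rename (upr r) e) := rfl
theorem rename_nu (r : ℕ → ℕ) (e : Expr A) : rename r (nu e) = nu (rename (upr r) e) := rfl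
theorem msubst_mu (r : ℕ → Expr A) (e : Expr A) : msubst r (mu e) = mu (msubst (ups r) e) := rfl
theorem msubst_nu (r : ℕ → Expr A) (e : Expr A) : msubst r (nu e) = nu (msubst (ups r) e) := rfl

theorem upr_comp (r s : ℕ → ℕ) : upr r ∘ upr s = upr (r ∘ s) := by
  funext n; cases n <;> rfl

theorem rename_rename (e : Expr A) : ∀ r s : ℕ → ℕ, rename r (rename s e) = rename (r ∘ s) e := by
  induction e with
  | var n => intro r s; rfl
  | act a e ih => intro r s; simp only [rename, ih]
  | plus e f ihe ihf => intro r s; simp only [rename, ihe, ihf]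
  | inter e f ihe ihf => intro r s; simp only [rename, ihe, ihf]
  | mu e ih => intro r s; simp only [rename_mu, ih, upr_comp]
  | nu e ih => intro r s; simp only [rename_nu, ih, upr_comp]

theorem ups_upr (τ : ℕ → Expr A) (s : ℕ → ℕ) : ups τ ∘ upr s = ups (τ ∘ s) := by
  funext n; cases n <;> rfl

theorem msubst_rename (e : Expr A) :
    ∀ (τ : ℕ → Expr A) (s : ℕ → ℕ), msubst τ (rename s e) = msubst (τ ∘ s) e := by
  induction e with
  | var n => intro r s; rfl
  | act a e ih => intro r s; simp only [rename, msubst, ih]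
  | plus e f ihe ihf => intro r s; simp only [rename, msubst, ihe, ihf]
  | inter e f ihe ihf => intro r s; simp only [rename, msubst, ihe, ihf]
  | mu e ih => intro r s; simp only [rename_mu, msubst_mu, ih, ups_upr]
  | nu e ih => intro r s; simp only [rename_nu, msubst_nu, ih, ups_upr]

theorem upr_ups (r : ℕ → ℕ) (τ : ℕ → Expr A) :
    rename (upr r) ∘ ups τ = ups (rename r ∘ τ) := by
  funext n
  cases n with
  | zero => rfl
  | succ m =>
    change rename (upr r) (rename (· + 1) (τ m)) = rename (· + 1) (rename r (τ m))
    rw [rename_rename, rename_rename]; rfl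

theorem rename_msubst (e : Expr A) :
    ∀ (r : ℕ → ℕ) (τ : ℕ → Expr A), rename r (msubst τ e) = msubst (rename r ∘ τ) e := by
  induction e with
  | var n => intro r s; rfl
  | act a e ih => intro r s; simp only [rename, msubst, ih]
  | plus e f ihe ihf => intro r s; simp only [rename, msubst, ihe, ihf]
  | inter e f ihe ihf => intro r s; simp only [rename, msubst, ihe, ihf]
  | mu e ih => intro r s; simp only [rename_mu, msubst_mu, ih, upr_ups]
  | nu e ih => intro r s; simp only [rename_nu, msubst_nu, ih, upr_ups]

theorem ups_ups (σ τ : ℕ → Expr A) :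
    msubst (ups σ) ∘ ups τ = ups (msubst σ ∘ τ) := by
  funext n
  cases n with
  | zero => rfl
  | succ m =>
    change msubst (ups σ) (rename (· + 1) (τ m)) = rename (· + 1) (msubst σ (τ m))
    rw [msubst_rename, rename_msubst]; rfl

theorem msubst_msubst (e : Expr A) :
    ∀ (σ τ : ℕ → Expr A), msubst σ (msubst τ e) = msubst (msubst σ ∘ τ) e := by
  induction e with
  | var n => intro r s; rfl
  | act a e ih => intro r s; simp only [msubst, ih]
  | plus e f ihe ihf => intro r s; simp only [msubst, ihe, ihf]
  | inter e f ihe ihf => intro r s; simp only [msubst, ihe, ihf]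
  | mu e ih => intro r s; simp only [msubst_mu, ih, ups_ups]
  | nu e ih => intro r s; simp only [msubst_nu, ih, ups_ups]

theorem ups_var : ups (var : ℕ → Expr A) = var := by
  funext n; cases n <;> rfl

theorem msubst_var (e : Expr A) : msubst var e = e := by
  induction e with
  | var n => rfl
  | act a e ih => simp only [msubst, ih]
  | plus e f ihe ihf => simp only [msubst, ihe, ihf]
  | inter e f ihe ihf => simp only [msubst, ihe, ihf]
  | mu e ih => simp only [msubst_mu, ups_var, ih]
  | nu e ih => simp only [msubst_nu, ups_var, ih]

theorem subst0_comm (τ : ℕ → Expr A) (g e : Expr A) :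
    subst0 (msubst τ g) (msubst (ups τ) e) = msubst τ (subst0 g e) := by
  unfold subst0
  rw [msubst_msubst, msubst_msubst]
  congr 1
  funext n
  cases n with
  | zero => rfl
  | succ m =>
    change msubst _ (rename (· + 1) (τ m)) = τ m
    rw [msubst_rename]
    exact msubst_var _

theorem step_msubst (τ : ℕ → Expr A) (f g : Expr A) (hf : ∀ n, f ≠ var n)
    (h : FLStep (msubst τ f) g) : ∃ g', FLStep f g' ∧ g = msubst τ g' := by
  cases f with
  | var n => exact absurd rfl (hf n)
  | act a e =>
    simp only [msubst] at h
    cases h; exact ⟨_, .act _ _, rfl⟩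
  | plus e f =>
    simp only [msubst] at h
    cases h
    · exact ⟨_, .plus_left _ _, rfl⟩
    · exact ⟨_, .plus_right _ _, rfl⟩
  | inter e f =>
    simp only [msubst] at h
    cases h
    · exact ⟨_, .inter_left _ _, rfl⟩
    · exact ⟨_, .inter_right _ _, rfl⟩
  | mu e =>
    rw [msubst_mu] at h
    cases h; exact ⟨_, .mu _, subst0_comm τ (mu e) e⟩
  | nu e =>
    rw [msubst_nu] at h
    cases h; exact ⟨_, .nu _, subst0_comm τ (nu e) e⟩

def clo : Expr A → List (Expr A)
  | var n => [var n]
  | act a e => act a e :: clo e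
  | plus e f => plus e f :: (clo e ++ clo f)
  | inter e f => inter e f :: (clo e ++ clo f)
  | mu e => mu e :: (clo e).map (subst0 (mu e))
  | nu e => nu e :: (clo e).map (subst0 (nu e))

theorem clo_length (e : Expr A) : (clo e).length = Expr.size e := by
  induction e <;> simp [clo, Expr.size, *]

theorem self_mem_clo (e : Expr A) : e ∈ clo e := by
  cases e <;> simp [clo]

theorem clo_binder (s e : Expr A) (hs : ∀ g, FLStep s g → g = subst0 s e)
    (ih : ∀ f ∈ clo e, ∀ g, FLStep f g → g ∈ clo e) :
    ∀ f ∈ s :: (clo e).map (subst0 s), ∀ g, FLStep f g →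
      g ∈ s :: (clo e).map (subst0 s) := by
  have key : ∀ g, FLStep s g → g ∈ s :: (clo e).map (subst0 s) := by
    intro g h
    rw [hs g h]
    exact List.mem_cons_of_mem _ (List.mem_map_of_mem (self_mem_clo e))
  intro f hf g h
  rcases List.mem_cons.1 hf with rfl | hf
  · exact key g h
  · obtain ⟨f', hf', rfl⟩ := List.mem_map.1 hf
    by_cases hv : ∃ n, f' = var n
    · obtain ⟨n, rfl⟩ := hv
      cases n with
      | zero => exact key g h
      | succ m =>
        change FLStep (var m) g at h
        cases h
    · obtain ⟨g', hg', rfl⟩ := step_msubst _ f' g (fun n hn => hv ⟨n, hn⟩) h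
      exact List.mem_cons_of_mem _ (List.mem_map_of_mem (ih f' hf' g' hg'))

theorem clo_step (e : Expr A) : ∀ f ∈ clo e, ∀ g, FLStep f g → g ∈ clo e := by
  induction e with
  | var n =>
    intro f hf g h
    simp only [clo, List.mem_singleton] at hf
    subst hf; cases h
  | act a e ih =>
    intro f hf g h
    rcases List.mem_cons.1 hf with rfl | hf
    · cases h; exact List.mem_cons_of_mem _ (self_mem_clo e)
    · exact List.mem_cons_of_mem _ (ih f hf g h)
  | plus e₁ e₂ ih₁ ih₂ =>
    intro f hf g h
    refine List.mem_cons_of_mem _ (List.mem_append.2 ?_)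
    rcases List.mem_cons.1 hf with rfl | hf
    · cases h
      · exact Or.inl (self_mem_clo _)
      · exact Or.inr (self_mem_clo _)
    · exact (List.mem_append.1 hf).imp (fun hf => ih₁ f hf g h) (fun hf => ih₂ f hf g h)
  | inter e₁ e₂ ih₁ ih₂ =>
    intro f hf g h
    refine List.mem_cons_of_mem _ (List.mem_append.2 ?_)
    rcases List.mem_cons.1 hf with rfl | hf
    · cases h
      · exact Or.inl (self_mem_clo _)
      · exact Or.inr (self_mem_clo _)
    · exact (List.mem_append.1 hf).imp (fun hf => ih₁ f hf g h) (fun hf => ih₂ f hf g h)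
  | mu e ih => exact clo_binder (mu e) e (fun g h => by cases h; rfl) ih
  | nu e ih => exact clo_binder (nu e) e (fun g h => by cases h; rfl) ih

theorem FL_subset_clo (e : Expr A) : FL e ⊆ {f | f ∈ clo e} := by
  intro f hf
  induction hf with
  | refl => exact self_mem_clo e
  | tail _ h ih => exact clo_step e _ ih _ h

end Helpers

/-- The Fischer-Ladner closure of every RLL expression is
finite; in fact its cardinality is (bounded linearly by, indeed at most) the
size of the expression. -/
theorem FL_finite_linear {A : Type} (e : Expr A) :
    (FL e).Finite ∧ (FL e).ncard ≤ Expr.size e := by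
  classical
  have hsub : FL e ⊆ ((clo e).toFinset : Set (Expr A)) := by
    intro f hf
    simpa using FL_subset_clo e hf
  refine ⟨(Finset.finite_toSet _).subset hsub, ?_⟩
  calc (FL e).ncard ≤ ((clo e).toFinset : Set (Expr A)).ncard :=
        Set.ncard_le_ncard hsub (Finset.finite_toSet _)
    _ = (clo e).toFinset.card := Set.ncard_coe_finset _
    _ ≤ (clo e).length := List.toFinset_card_le _
    _ = Expr.size e := clo_length e

end RLLPaper
end

section
/- Incompleteness via the Cantor topology: in the Cantor topology on A^ω (where a set is open iff it is a union of basic cylinders u·A^ω for finite words u), if A ⊆ A^ω is open and A ⊆ aA := {aσ | σ ∈ A} for a letter a, then A = ∅. Consequently, the greatest open postfixed point of the operator A ↦ aA is the empty set, whereas its greatest postfixed point among all subsets of A^ω is {a^ω} (assuming |A| ≥ 2), which is nonempty. -/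
namespace RLLPaper

/-- A subset of `A^ω` is open in the Cantor topology iff it is a union of
basic cylinders `u·A^ω` for finite words `u`. -/
def IsOpenC {A : Type} (S : Set (Stream' A)) : Prop :=
  ∃ U : Set (List A), S = ⋃ u ∈ U, Set.range (Stream'.appendStream' u)

theorem post_get {A : Type} (a : A) (S : Set (Stream' A)) (h : S ⊆ Stream'.cons a '' S) :
    ∀ n : ℕ, ∀ s ∈ S, Stream'.get s n = a := by
  intro n
  induction n with
  | zero =>
    intro s hs
    obtain ⟨t, _, rfl⟩ := h hs
    rfl
  | succ n ih =>
    intro s hs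
    obtain ⟨t, ht, rfl⟩ := h hs
    exact ih t ht

theorem append_get {A : Type} (b : A) (u : List A) :
    Stream'.get (Stream'.appendStream' u (Stream'.const b)) u.length = b := by
  induction u with
  | nil => rfl
  | cons x u ih => exact ih

theorem open_post {A : Type} [Nontrivial A] (a : A) (S : Set (Stream' A)) (ho : IsOpenC S)
    (h : S ⊆ Stream'.cons a '' S) : S = ∅ := by
  obtain ⟨U, hU⟩ := ho
  rw [Set.eq_empty_iff_forall_notMem]
  intro s hs
  rw [hU] at hs
  simp only [Set.mem_iUnion] at hs
  obtain ⟨u, hu, _⟩ := hs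
  obtain ⟨b, hb⟩ := exists_ne a
  apply hb
  have hm : Stream'.appendStream' u (Stream'.const b) ∈ S := by
    rw [hU]
    simp only [Set.mem_iUnion]
    exact ⟨u, hu, _, rfl⟩
  rw [← post_get a S h u.length _ hm, append_get]

/-- Incompleteness via the Cantor topology: over a finite
alphabet with at least two letters, (1) if `S ⊆ A^ω` is open and
`S ⊆ aS := {aσ | σ ∈ S}`, then `S = ∅`; consequently (2) the greatest open
postfixed point of `S ↦ aS` is the empty set, whereas (3) its greatest
postfixed point among all subsets of `A^ω` is `{a^ω}`, which is (4) nonempty. -/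
theorem cantor_incompleteness {A : Type} [Fintype A] [Nontrivial A] (a : A) :
    (∀ S : Set (Stream' A), IsOpenC S → S ⊆ Stream'.cons a '' S → S = ∅) ∧
    (⋃₀ {S : Set (Stream' A) | IsOpenC S ∧ S ⊆ Stream'.cons a '' S} = ∅) ∧
    (⋃₀ {S : Set (Stream' A) | S ⊆ Stream'.cons a '' S} = {Stream'.const a}) ∧
    ({Stream'.const a} : Set (Stream' A)).Nonempty := by
  refine ⟨open_post a, ?_, ?_, Set.singleton_nonempty _⟩
  · rw [Set.sUnion_eq_empty]
    rintro S ⟨ho, h⟩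
    exact open_post a S ho h
  · apply Set.Subset.antisymm
    · rintro s ⟨S, hS, hs⟩
      have : s = Stream'.const a := Stream'.ext fun n => post_get a S hS n s hs
      exact this
    · rintro s rfl
      refine ⟨{Stream'.const a}, ?_, rfl⟩
      rintro t rfl
      exact ⟨_, rfl, (Stream'.const_eq a).symm⟩

end RLLPaper
end

section
/- Soundness of the μ-ν duality principle in the powerset lattice: let S be a set and let e, f : P(S) → P(S) be monotone operators on the powerset lattice of S. (1) If for all X, Y ⊆ S, X ∪ Y = S implies e(X) ∪ f(Y) = S, then lfp(e) ∪ gfp(f) = S. (2) Dually, if for all X, Y ⊆ S, X ∩ Y = ∅ implies e(X) ∩ f(Y) = ∅, then lfp(e) ∩ gfp(f) = ∅. -/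
/-- Soundness of the μ-ν duality principle in the powerset
lattice: let `e, f : P(S) → P(S)` be monotone operators.
(1) If `X ∪ Y = S` implies `e(X) ∪ f(Y) = S` for all `X, Y ⊆ S`, then
`lfp(e) ∪ gfp(f) = S`.  (2) Dually, if `X ∩ Y = ∅` implies `e(X) ∩ f(Y) = ∅`
for all `X, Y ⊆ S`, then `lfp(e) ∩ gfp(f) = ∅`. -/
theorem duality_sound_powerset {S : Type*} (e f : Set S → Set S)
    (he : Monotone e) (hf : Monotone f) :
    ((∀ X Y : Set S, X ∪ Y = Set.univ → e X ∪ f Y = Set.univ) →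
      OrderHom.lfp ⟨e, he⟩ ∪ OrderHom.gfp ⟨f, hf⟩ = Set.univ) ∧
    ((∀ X Y : Set S, X ∩ Y = ∅ → e X ∩ f Y = ∅) →
      OrderHom.lfp ⟨e, he⟩ ∩ OrderHom.gfp ⟨f, hf⟩ = ∅) := by
  refine ⟨fun h => ?_, fun h => ?_⟩
  · have hL : e (OrderHom.lfp ⟨e, he⟩) = OrderHom.lfp ⟨e, he⟩ := OrderHom.map_lfp ⟨e, he⟩
    generalize hl : OrderHom.lfp ⟨e, he⟩ = L at hL ⊢
    have h1 := h L Lᶜ (Set.union_compl_self L)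
    rw [hL] at h1
    have h2 : Lᶜ ≤ OrderHom.gfp ⟨f, hf⟩ := by
      apply OrderHom.le_gfp
      intro x hx
      have h3 : x ∈ L ∪ f Lᶜ := by rw [h1]; trivial
      exact h3.resolve_left hx
    refine Set.eq_univ_of_forall fun x => ?_
    by_cases hx : x ∈ L
    · exact Or.inl hx
    · exact Or.inr (h2 hx)
  · have hG : f (OrderHom.gfp ⟨f, hf⟩) = OrderHom.gfp ⟨f, hf⟩ := OrderHom.map_gfp ⟨f, hf⟩
    generalize hg : OrderHom.gfp ⟨f, hf⟩ = G at hG ⊢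
    have h1 := h Gᶜ G (Set.compl_inter_self G)
    rw [hG] at h1
    have h2 : OrderHom.lfp ⟨e, he⟩ ≤ Gᶜ := by
      apply OrderHom.lfp_le
      intro x hx hxG
      have h3 : x ∈ e Gᶜ ∩ G := ⟨hx, hxG⟩
      rw [h1] at h3
      exact h3
    exact Set.eq_empty_of_forall_notMem fun x hx => h2 hx.1 hx.2
end

section
/- The min-max duality property of the unit interval model: let f, g : [0,1] → [0,1] be monotone (non-decreasing) functions, and set α := inf {x ∈ [0,1] | f(x) ≤ x} and β := sup {x ∈ [0,1] | x ≤ g(x)}. If for all x, y ∈ [0,1], max(x,y) ≥ 1 implies max(f(x), g(y)) ≥ 1, then max(f(α), g(β)) ≥ 1. -/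
/-- Min-max duality in the unit interval model: let
`f, g : [0,1] → [0,1]` be monotone (non-decreasing) functions, and set
`α := inf {x ∈ [0,1] | f x ≤ x}` and `β := sup {x ∈ [0,1] | x ≤ g x}`.
If for all `x, y ∈ [0,1]`, `max x y ≥ 1` implies `max (f x) (g y) ≥ 1`, then
`max (f α) (g β) ≥ 1`. -/
theorem minmax_duality (f g : ℝ → ℝ)
    (hf : MonotoneOn f (Set.Icc 0 1)) (hg : MonotoneOn g (Set.Icc 0 1))
    (hfr : Set.MapsTo f (Set.Icc 0 1) (Set.Icc 0 1))
    (hgr : Set.MapsTo g (Set.Icc 0 1) (Set.Icc 0 1))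
    (h : ∀ x ∈ Set.Icc (0:ℝ) 1, ∀ y ∈ Set.Icc (0:ℝ) 1,
      1 ≤ max x y → 1 ≤ max (f x) (g y)) :
    1 ≤ max (f (sInf {x : ℝ | x ∈ Set.Icc (0:ℝ) 1 ∧ f x ≤ x}))
          (g (sSup {x : ℝ | x ∈ Set.Icc (0:ℝ) 1 ∧ x ≤ g x})) := by
  have h0 : (0:ℝ) ∈ Set.Icc (0:ℝ) 1 := by simp
  have h1 : (1:ℝ) ∈ Set.Icc (0:ℝ) 1 := by simp
  rcases le_max_iff.1 (h 0 h0 1 h1 (le_max_right _ _)) with hc | hc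
  · have hm : (1:ℝ) ∈ {x : ℝ | x ∈ Set.Icc (0:ℝ) 1 ∧ f x ≤ x} := ⟨h1, (hfr h1).2⟩
    have ha0 : 0 ≤ sInf {x : ℝ | x ∈ Set.Icc (0:ℝ) 1 ∧ f x ≤ x} :=
      le_csInf ⟨1, hm⟩ fun x hx => hx.1.1
    have ha1 : sInf {x : ℝ | x ∈ Set.Icc (0:ℝ) 1 ∧ f x ≤ x} ≤ 1 :=
      csInf_le ⟨0, fun x hx => hx.1.1⟩ hm
    exact le_max_of_le_left (hc.trans (hf h0 ⟨ha0, ha1⟩ ha0))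
  · have hb : IsGreatest {x : ℝ | x ∈ Set.Icc (0:ℝ) 1 ∧ x ≤ g x} 1 :=
      ⟨⟨h1, hc⟩, fun x hx => hx.1.2⟩
    rw [hb.csSup_eq]
    exact le_max_of_le_right hc
end
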